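/- Let A be a unital complex Banach algebra, let S = Σ_{i=1}^n M_{a_i,b_i} be a spectrally bounded elementary operator on A, and let ρ be an irreducible representation of A on a complex Banach space E. Then for every ζ ∈ E and every x ∈ A satisfying ρ(x)ρ(b_i a_j)ζ ∈ ℂζ for all 1 ≤ i, j ≤ n and ρ(x)ζ = 0, the operator Σ_{i=1}^n ρ(a_i)ρ(x)ρ(b_i) maps the finite-dimensional subspace span{ρ(a_1)ζ, …, ρ(a_n)ζ} into itself and its restriction to this subspace is nilpotent. -/

import Mathlib

open scoped ENNReal NNReal

/-- A map between complex algebras is spectrally bounded if `r(Tx) ≤ M·r(x)`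
for some constant `M ≥ 0` and all `x`. -/
def SpectrallyBounded {A B : Type*} [Ring A] [Algebra ℂ A] [Ring B] [Algebra ℂ B]
    (T : A → B) : Prop :=
  ∃ M : ℝ≥0, ∀ x : A, spectralRadius ℂ (T x) ≤ (M : ℝ≥0∞) * spectralRadius ℂ x

/-! The operator `∑ i, ρ (a i) * ρ x * ρ (b i)` is `ρ (S x)`. By Schur's lemma and Jacobson density
some `y` in the algebra acts on `ζ` and on the finitely many vectors `ρ (b i * a j) ζ` as a
projection onto `ℂ ζ`. For small `t > 0` the element `1 - t y` is invertible, and its powers `u`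
scale `ζ` by arbitrarily small factors `c` while fixing the vectors `ρ (b i * a j) ζ` modulo `ℂ ζ`.
Because `ρ x` kills `ζ` and sends these vectors into `ℂ ζ`, on the span of the `ρ (a i) ζ` the
operator `ρ (S (u⁻¹ x u))` is `c⁻¹ ρ (S x)`. An eigenvalue `μ` of `ρ (S x)` on this span thus gives
`|c⁻¹ μ| ≤ r (S (u⁻¹ x u)) ≤ M r (u⁻¹ x u) = M r x`, and letting `c → 0` forces `μ = 0`. -/

open Submodule

section Density

theorem continuous_linearMap_of_quotient_ideal {R M : Type*} [Ring R] [TopologicalSpace R]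
    [AddCommGroup M] [Module R M] [TopologicalSpace M] [ContinuousSMul R M] {I : Ideal R}
    (f : (R ⧸ I) →ₗ[R] M) : Continuous f := by
  have hf : f ∘ I.mkQ = fun r ↦ r • f (I.mkQ 1) := by
    ext r
    rw [← map_smul, ← map_smul, smul_eq_mul, mul_one, Function.comp_apply]
  rw [I.isQuotientMap_mkQ.continuous_iff, hf]
  fun_prop

variable {A : Type*} [NormedRing A] [NormedAlgebra ℂ A] [CompleteSpace A]

theorem exists_end_quotient_eq_algebraMap (I : Ideal A) [I.IsMaximal]
    (D : Module.End A (A ⧸ I)) : ∃ c : ℂ, D = algebraMap ℂ (Module.End A (A ⧸ I)) c := by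
  have : IsSimpleModule A (A ⧸ I) := isSimpleModule_iff_quot_maximal.2 ⟨I, ‹_›, ⟨.refl ..⟩⟩
  have : Nontrivial (A ⧸ I) := IsSimpleModule.nontrivial A (A ⧸ I)
  let T : (A ⧸ I) →L[ℂ] (A ⧸ I) :=
    ⟨D.restrictScalars ℂ, continuous_linearMap_of_quotient_ideal D⟩
  -- The maximal left ideal `I` is closed, so `T` is a bounded operator on a Banach space.
  obtain ⟨c, hc⟩ := spectrum.nonempty T
  refine ⟨c, (sub_eq_zero.1 ?_).symm⟩
  refine (LinearMap.bijective_or_eq_zero _).resolve_left fun hbij ↦ hc ?_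
  exact ContinuousLinearMap.isUnit_iff_bijective.2 hbij

variable {E : Type*} [AddCommGroup E] [Module ℂ E] [Module A E] [IsScalarTower ℂ A E]
  [IsSimpleModule A E]

theorem exists_forall_end_apply_eq_smul (D : Module.End A E) : ∃ c : ℂ, ∀ v, D v = c • v := by
  obtain ⟨I, hI, ⟨e⟩⟩ := isSimpleModule_iff_quot_maximal.1 ‹IsSimpleModule A E›
  obtain ⟨c, hc⟩ := exists_end_quotient_eq_algebraMap I (e.conjRingEquiv D)
  refine ⟨c, fun v ↦ e.injective ?_⟩
  have hev : e (D v) = c • e v := by simpa using LinearMap.congr_fun hc (e v)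
  exact hev.trans (e.toLinearMap.map_smul_of_tower c v).symm

theorem exists_smul_eq_linearMap_apply (f : Module.End ℂ E) (s : Finset E) :
    ∃ y : A, ∀ v ∈ s, y • v = f v := by
  let g : Module.End (Module.End A E) E :=
    { f with
      map_smul' := fun D v ↦ by
        obtain ⟨c, hc⟩ := exists_forall_end_apply_eq_smul D
        simp [hc] }
  obtain ⟨y, hy⟩ := jacobson_density g s
  exact ⟨y, fun v hv ↦ (hy v hv).symm⟩

end Density

section Contraction

theorem pow_smul_sub_self_mem {G M S : Type*} [Monoid G] [AddGroup M] [DistribMulAction G M]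
    [SetLike S M] [AddSubgroupClass S M] {s : S} {g : G} (hs : ∀ v ∈ s, g • v ∈ s) {v : M}
    (hv : g • v - v ∈ s) (k : ℕ) : g ^ k • v - v ∈ s := by
  induction k with
  | zero => simp
  | succ k ih =>
    have hsplit : g ^ (k + 1) • v - v = g • (g ^ k • v - v) + (g • v - v) := by
      rw [pow_succ', mul_smul, smul_sub, sub_add_sub_cancel]
    exact hsplit ▸ add_mem (hs _ ih) hv

theorem pow_smul_eq_pow_smul {R G M : Type*} [Monoid R] [Monoid G] [MulAction R M] [MulAction G M]
    [SMulCommClass G R M] {g : G} {c : R} {v : M} (h : g • v = c • v) (k : ℕ) :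
    g ^ k • v = c ^ k • v := by
  induction k with
  | zero => simp
  | succ k ih => rw [pow_succ, mul_smul, h, smul_comm, ih, smul_smul, ← pow_succ']

theorem exists_end_apply_eq_self_mem_span_singleton {K V : Type*} [DivisionRing K]
    [AddCommGroup V] [Module K V] (ζ : V) :
    ∃ f : Module.End K V, f ζ = ζ ∧ ∀ v, f v ∈ span K {ζ} := by
  obtain ⟨q, hq⟩ := (span K {ζ}).exists_isCompl
  exact ⟨_, projection_apply_left hq ⟨ζ, mem_span_singleton_self ζ⟩, projection_apply_mem hq⟩

variable {A : Type*} [NormedRing A] [NormedAlgebra ℂ A] [CompleteSpace A]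
  {E : Type*} [AddCommGroup E] [Module ℂ E] [Module A E] [IsScalarTower ℂ A E] [IsSimpleModule A E]

theorem exists_unit_smul_eq_real_smul (ζ : E) (s : Finset E) :
    ∃ u : Aˣ, ∃ r ∈ Set.Ioo (0 : ℝ) 1, u • ζ = (r : ℂ) • ζ ∧ ∀ v ∈ s, u • v - v ∈ span ℂ {ζ} := by
  classical
  obtain ⟨f, hfζ, hf⟩ := exists_end_apply_eq_self_mem_span_singleton (K := ℂ) ζ
  obtain ⟨y, hy⟩ := exists_smul_eq_linearMap_apply (A := A) f (insert ζ s)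
  obtain ⟨t, ht, hty⟩ : ∃ t ∈ Set.Ioo (0 : ℝ) 1, ‖(t : ℂ) • y‖ < 1 := by
    have hpos : 0 < ‖y‖ + 2 := by positivity
    refine ⟨(‖y‖ + 2)⁻¹, ⟨by positivity, inv_lt_one_of_one_lt₀ (by linarith [norm_nonneg y])⟩, ?_⟩
    rw [norm_smul, Complex.norm_real, Real.norm_of_nonneg (by positivity), inv_mul_lt_one₀ hpos]
    linarith
  have hu (v : E) : Units.oneSub _ hty • v = v - (t : ℂ) • y • v := by
    rw [Units.smul_def, Units.val_oneSub, sub_smul, one_smul, smul_assoc]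
  refine ⟨Units.oneSub _ hty, 1 - t, by grind, ?_, fun v hv ↦ ?_⟩
  · rw [hu, hy ζ (Finset.mem_insert_self ζ s), hfζ]
    push_cast
    rw [sub_smul, one_smul]
  · rw [hu, hy v (Finset.mem_insert_of_mem hv), sub_sub_cancel_left]
    exact neg_mem (smul_mem _ _ (hf v))

theorem exists_unit_smul_eq_smul_norm_lt (ζ : E) (s : Finset E) {ε : ℝ} (hε : 0 < ε) :
    ∃ u : Aˣ, ∃ c : ℂ, c ≠ 0 ∧ ‖c‖ < ε ∧ u • ζ = c • ζ ∧ ∀ v ∈ s, u • v - v ∈ span ℂ {ζ} := by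
  obtain ⟨u, r, ⟨hr₀, hr₁⟩, huζ, hu⟩ := exists_unit_smul_eq_real_smul (A := A) ζ s
  obtain ⟨k, hk⟩ := exists_pow_lt_of_lt_one hε hr₁
  have hspan : ∀ w ∈ span ℂ {ζ}, u • w ∈ span ℂ {ζ} := fun w hw ↦ by
    obtain ⟨d, rfl⟩ := mem_span_singleton.1 hw
    rw [smul_comm, huζ]
    exact smul_mem _ _ (smul_mem _ _ (mem_span_singleton_self ζ))
  refine ⟨u ^ k, (r : ℂ) ^ k, pow_ne_zero k (Complex.ofReal_ne_zero.2 hr₀.ne'), ?_,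
    pow_smul_eq_pow_smul huζ k, fun v hv ↦ pow_smul_sub_self_mem hspan (hu v hv) k⟩
  rwa [norm_pow, Complex.norm_real, Real.norm_of_nonneg hr₀.le]

end Contraction

section ElementaryOperator

variable {ι R A E : Type*} [Fintype ι] [CommRing R] [Ring A] [Algebra R A] [AddCommGroup E]
  [Module R E] [Module A E] [IsScalarTower R A E] {a b : ι → A} {c : R} {x z : A} {ζ v w : E}

theorem smul_units_conj_smul_eq {u : Aˣ} (huζ : u • ζ = c • ζ) (huv : u • v - v ∈ span R {ζ})
    (hxζ : x • ζ = 0) (hxv : x • v ∈ span R {ζ}) : c • (↑u⁻¹ * x * u) • v = x • v := by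
  obtain ⟨d, hd⟩ := mem_span_singleton.1 huv
  obtain ⟨e, he⟩ := mem_span_singleton.1 hxv
  have hxuv : x • u • v = x • v := by
    rw [← sub_eq_zero, ← smul_sub, ← hd, smul_comm, hxζ, smul_zero]
  calc c • (↑u⁻¹ * x * u) • v = c • u⁻¹ • x • u • v := by simp only [mul_smul, Units.smul_def]
    _ = e • u⁻¹ • c • ζ := by rw [hxuv, ← he, smul_comm u⁻¹ e, smul_comm u⁻¹ c, smul_comm c e]
    _ = x • v := by rw [← huζ, inv_smul_smul, he]

theorem sum_mul_smul_smul (a b : ι → A) (x y : A) (v : E) :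
    (∑ i, a i * x * b i) • y • v = ∑ i, a i • x • (b i * y) • v := by
  simp only [Finset.sum_smul, mul_smul]

theorem sum_mul_smul_mem_span (hx : ∀ i j, x • (b i * a j) • ζ ∈ span R {ζ})
    (hw : w ∈ span R (Set.range fun i ↦ a i • ζ)) :
    (∑ i, a i * x * b i) • w ∈ span R (Set.range fun i ↦ a i • ζ) := by
  suffices h : span R (Set.range fun i ↦ a i • ζ) ≤
      comap (Algebra.lsmul R R E (∑ i, a i * x * b i)) (span R (Set.range fun i ↦ a i • ζ)) from
    h hw
  rw [span_le]
  rintro _ ⟨j, rfl⟩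
  change (∑ i, a i * x * b i) • a j • ζ ∈ span R (Set.range fun i ↦ a i • ζ)
  rw [sum_mul_smul_smul]
  refine sum_mem fun i _ ↦ ?_
  obtain ⟨d, hd⟩ := mem_span_singleton.1 (hx i j)
  rw [← hd, smul_comm]
  exact smul_mem _ d (subset_span ⟨i, rfl⟩)

theorem smul_sum_mul_smul_eq (hz : ∀ i j, c • z • (b i * a j) • ζ = x • (b i * a j) • ζ)
    (hw : w ∈ span R (Set.range fun i ↦ a i • ζ)) :
    c • (∑ i, a i * z * b i) • w = (∑ i, a i * x * b i) • w := by
  refine LinearMap.eqOn_span (f := c • Algebra.lsmul R R E (∑ i, a i * z * b i))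
    (g := Algebra.lsmul R R E (∑ i, a i * x * b i)) ?_ hw
  rintro _ ⟨j, rfl⟩
  simp only [LinearMap.smul_apply, Algebra.lsmul_coe, sum_mul_smul_smul, Finset.smul_sum, ← hz,
    smul_comm c (a _)]

end ElementaryOperator

section Spectrum

variable {K A : Type*} [NormedField K]

theorem enorm_le_spectralRadius_of_smul_eq_smul {E : Type*} [Ring A] [Algebra K A]
    [AddCommGroup E] [Module K E] [Module A E] [IsScalarTower K A E] {a : A} {μ : K} {w : E}
    (hw : w ≠ 0) (h : a • w = μ • w) : ‖μ‖ₑ ≤ spectralRadius K a := by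
  have hμ : μ ∈ spectrum K a := fun hunit ↦ hw <| by
    rw [← hunit.smul_eq_zero, sub_smul, algebraMap_smul, h, sub_self]
  exact le_iSup₂ (f := fun k (_ : k ∈ spectrum K a) ↦ ‖k‖ₑ) μ hμ

theorem spectralRadius_ne_top [NormedRing A] [NormedAlgebra K A] [CompleteSpace A] (a : A) :
    spectralRadius K a ≠ ⊤ :=
  ne_top_of_le_ne_top (by simp [ENNReal.mul_ne_top])
    (spectrum.spectralRadius_le_pow_nnnorm_pow_one_div K a 0)

theorem spectralRadius_units_conjugate' [Ring A] [Algebra K A] (u : Aˣ) (a : A) :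
    spectralRadius K (↑u⁻¹ * a * u) = spectralRadius K a := by
  rw [spectralRadius, spectrum.units_conjugate', spectralRadius]

end Spectrum

section Nilpotent

variable {K V : Type*} [Field K] [IsAlgClosed K] [AddCommGroup V] [Module K V] {f : Module.End K V}

theorem isNilpotent_of_forall_hasEigenvalue_eq_zero [FiniteDimensional K V]
    (h : ∀ μ, f.HasEigenvalue μ → μ = 0) : IsNilpotent f := by
  have hroots : f.charpoly.roots = Multiset.replicate (Module.finrank K V) 0 := by
    refine Multiset.eq_replicate.2 ⟨?_, fun μ hμ ↦ h μ ?_⟩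
    · rw [← (IsAlgClosed.splits _).natDegree_eq_card_roots, f.charpoly_natDegree]
    · exact (f.hasEigenvalue_iff_isRoot_charpoly μ).2 (Polynomial.isRoot_of_mem_roots hμ)
  rw [LinearMap.isNilpotent_iff_charpoly,
    (IsAlgClosed.splits _).eq_prod_roots_of_monic f.charpoly_monic, hroots]
  simp

theorem exists_pow_apply_eq_zero_of_forall_apply_eq_smul {W : Submodule K V}
    [FiniteDimensional K W] (hW : ∀ w ∈ W, f w ∈ W)
    (h : ∀ μ : K, ∀ w ∈ W, w ≠ 0 → f w = μ • w → μ = 0) : ∃ k : ℕ, ∀ w ∈ W, (f ^ k) w = 0 := by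
  obtain ⟨k, hk⟩ : IsNilpotent (f.restrict hW) := by
    refine isNilpotent_of_forall_hasEigenvalue_eq_zero fun μ hμ ↦ ?_
    obtain ⟨w, hw⟩ := hμ.exists_hasEigenvector
    exact h μ w w.2 (by simpa using hw.2) (congrArg Subtype.val hw.apply_eq_smul)
  refine ⟨k, fun w hw ↦ ?_⟩
  rw [Module.End.pow_restrict] at hk
  exact congrArg Subtype.val (LinearMap.congr_fun hk ⟨w, hw⟩)

end Nilpotent

section LocalNilpotency

variable {A E ι : Type*} [NormedRing A] [NormedAlgebra ℂ A] [CompleteSpace A] [AddCommGroup E]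
  [Module ℂ E] [Fintype ι] {a b : ι → A} {ζ : E} {x : A}

theorem exists_conj_smul_sum_mul_smul_eq [Module A E] [IsScalarTower ℂ A E] [IsSimpleModule A E]
    (hx : ∀ i j, x • (b i * a j) • ζ ∈ span ℂ {ζ}) (hxζ : x • ζ = 0) {ε : ℝ} (hε : 0 < ε) :
    ∃ u : Aˣ, ∃ c : ℂ, c ≠ 0 ∧ ‖c‖ < ε ∧ ∀ w ∈ span ℂ (Set.range fun i ↦ a i • ζ),
      c • (∑ i, a i * (↑u⁻¹ * x * u) * b i) • w = (∑ i, a i * x * b i) • w := by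
  classical
  obtain ⟨u, c, hc, hcε, huζ, hu⟩ := exists_unit_smul_eq_smul_norm_lt (A := A) ζ
    (Finset.univ.image fun p : ι × ι ↦ (b p.1 * a p.2) • ζ) hε
  refine ⟨u, c, hc, hcε, fun w ↦ smul_sum_mul_smul_eq fun i j ↦ ?_⟩
  have huv := hu _ (Finset.mem_image_of_mem _ (Finset.mem_univ (i, j)))
  exact smul_units_conj_smul_eq huζ huv hxζ (hx i j)

theorem eq_zero_of_sum_mul_smul_eq_smul [Module A E] [IsScalarTower ℂ A E] [IsSimpleModule A E]
    (hS : SpectrallyBounded fun x : A ↦ ∑ i, a i * x * b i)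
    (hx : ∀ i j, x • (b i * a j) • ζ ∈ span ℂ {ζ}) (hxζ : x • ζ = 0) {μ : ℂ} {w : E}
    (hw : w ∈ span ℂ (Set.range fun i ↦ a i • ζ)) (hw₀ : w ≠ 0)
    (hμ : (∑ i, a i * x * b i) • w = μ • w) : μ = 0 := by
  obtain ⟨M, hM⟩ := hS
  obtain ⟨C, hC⟩ : ∃ C : ℝ≥0, M * spectralRadius ℂ x = C :=
    ⟨_, (ENNReal.coe_toNNReal (by finiteness [spectralRadius_ne_top (K := ℂ) x])).symm⟩
  have hbound {ε : ℝ} (hε : 0 < ε) : ‖μ‖ ≤ ε * C := by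
    obtain ⟨u, c, hc, hcε, hu⟩ := exists_conj_smul_sum_mul_smul_eq hx hxζ hε
    have heig : (∑ i, a i * (↑u⁻¹ * x * u) * b i) • w = (c⁻¹ * μ) • w := by
      rw [mul_smul, ← hμ, ← hu w hw, inv_smul_smul₀ hc]
    have hle : ‖c⁻¹ * μ‖ₑ ≤ C := by
      rw [← hC, ← spectralRadius_units_conjugate' u x]
      exact (enorm_le_spectralRadius_of_smul_eq_smul hw₀ heig).trans (hM _)
    have hle' : ‖c⁻¹ * μ‖ ≤ C := by exact_mod_cast hle
    calc ‖μ‖ = ‖c‖ * ‖c⁻¹ * μ‖ := by rw [← norm_mul, mul_inv_cancel_left₀ hc]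
      _ ≤ ε * C := by gcongr
  by_contra hμ₀
  have hpos : 0 < ‖μ‖ := norm_pos_iff.2 hμ₀
  have hlt : ‖μ‖ / (C + 1) * C < ‖μ‖ := by
    rw [div_mul_eq_mul_div, div_lt_iff₀ (by positivity)]
    linarith
  exact (hbound (by positivity)).not_gt hlt

theorem spectrally_bounded_elementary_operator_local_nilpotency_general (a b : ι → A)
    (hS : SpectrallyBounded fun x : A ↦ ∑ i, a i * x * b i) (ρ : A →ₐ[ℂ] Module.End ℂ E)
    (hρirr : ∀ ζ : E, ζ ≠ 0 → ∀ η : E, ∃ y : A, ρ y ζ = η) (ζ : E) (x : A)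
    (hx : ∀ i j, ∃ c : ℂ, ρ x (ρ (b i * a j) ζ) = c • ζ) (hxζ : ρ x ζ = 0) :
    (∀ w ∈ span ℂ (Set.range fun i ↦ ρ (a i) ζ),
        (∑ i, ρ (a i) * ρ x * ρ (b i)) w ∈ span ℂ (Set.range fun i ↦ ρ (a i) ζ)) ∧
      ∃ k : ℕ, ∀ w ∈ span ℂ (Set.range fun i ↦ ρ (a i) ζ),
        ((∑ i, ρ (a i) * ρ x * ρ (b i)) ^ k) w = 0 := by
  let _ : Module A E := Module.compHom E ρ.toRingHom
  have hsmul (y : A) (v : E) : y • v = ρ y v := rfl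
  have : IsScalarTower ℂ A E := ⟨fun c y v ↦ by simp only [hsmul, map_smul, LinearMap.smul_apply]⟩
  have hS_apply : ∑ i, ρ (a i) * ρ x * ρ (b i) = ρ (∑ i, a i * x * b i) := by
    simp only [map_sum, map_mul]
  rw [hS_apply]
  simp only [← hsmul] at hx hxζ hρirr ⊢
  have hx' : ∀ i j, x • (b i * a j) • ζ ∈ span ℂ {ζ} := fun i j ↦
    mem_span_singleton.2 ((hx i j).imp fun _ ↦ Eq.symm)
  have hinv : ∀ w ∈ span ℂ (Set.range fun i ↦ a i • ζ),
      (∑ i, a i * x * b i) • w ∈ span ℂ (Set.range fun i ↦ a i • ζ) :=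
    fun _ ↦ sum_mul_smul_mem_span hx'
  have : FiniteDimensional ℂ (span ℂ (Set.range fun i ↦ a i • ζ)) :=
    .span_of_finite ℂ (Set.finite_range _)
  refine ⟨hinv, exists_pow_apply_eq_zero_of_forall_apply_eq_smul hinv fun μ w hw hw₀ hμ ↦ ?_⟩
  have : IsSimpleModule A E :=
    isSimpleModule_iff_toSpanSingleton_surjective.2 ⟨⟨w, 0, hw₀⟩, hρirr⟩
  exact eq_zero_of_sum_mul_smul_eq_smul hS hx' hxζ hw hw₀ hμ

end LocalNilpotency

/-- **Lemma 3.3.** Let `A` be a unital complex Banach algebra, let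
`S = Σ_{i=1}^n M_{a_i,b_i}` be a spectrally bounded elementary operator on `A`,
and let `ρ` be an irreducible representation of `A` on a complex Banach
space `E`.  Then for every `ζ ∈ E` and every `x ∈ A` satisfying
`ρ(x)ρ(b_i a_j)ζ ∈ ℂζ` for all `i, j` and `ρ(x)ζ = 0`, the operator
`Σ_{i=1}^n ρ(a_i)ρ(x)ρ(b_i)` leaves the finite-dimensional subspace
`span{ρ(a_1)ζ, …, ρ(a_n)ζ}` invariant and its restriction to this subspace is
nilpotent. -/
theorem spectrally_bounded_elementary_operator_local_nilpotency
    {A : Type*} [NormedRing A] [NormedAlgebra ℂ A] [CompleteSpace A]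
    {E : Type*} [NormedAddCommGroup E] [NormedSpace ℂ E] [CompleteSpace E]
    {n : ℕ} (a b : Fin n → A)
    (hS : SpectrallyBounded (fun x : A => ∑ i, a i * x * b i))
    (ρ : A →ₐ[ℂ] (E →L[ℂ] E)) (hρcont : Continuous ρ)
    (hρirr : ∀ ζ : E, ζ ≠ 0 → ∀ η : E, ∃ y : A, ρ y ζ = η)
    (ζ : E) (x : A)
    (hx : ∀ i j : Fin n, ∃ c : ℂ, ρ x (ρ (b i * a j) ζ) = c • ζ)
    (hxζ : ρ x ζ = 0) :
    (∀ w ∈ Submodule.span ℂ (Set.range fun i => ρ (a i) ζ),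
        (∑ i, ρ (a i) * ρ x * ρ (b i)) w ∈
          Submodule.span ℂ (Set.range fun i => ρ (a i) ζ)) ∧
      ∃ k : ℕ, ∀ w ∈ Submodule.span ℂ (Set.range fun i => ρ (a i) ζ),
        ((∑ i, ρ (a i) * ρ x * ρ (b i)) ^ k) w = 0 := by
  let toEnd : (E →L[ℂ] E) →ₐ[ℂ] Module.End ℂ E :=
    { ContinuousLinearMap.toLinearMapRingHom with commutes' := fun _ ↦ rfl }
  have h := spectrally_bounded_elementary_operator_local_nilpotency_general a b hS (toEnd.comp ρ)
    hρirr ζ x hx hxζ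
  simp only [AlgHom.comp_apply, ← map_mul, ← map_sum, ← map_pow] at h ⊢
  exact h
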